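/- arXiv:2210.12405 — 4 statements merged into one kernel-verified Lean document; each statement's English description precedes it below -/
import Mathlib

section
/- Let A be a d-dimensional (0,1)-matrix of order n, let Λ = (λ_{i,j}) be an optimal hyperplane cover of A, and let K = (k_α) be a polyplex of maximum weight in A. Then: (1) for every index α, if k_α > 0 then Σ_{i ∈ Fin d} λ_{i, α_i} = 1; and (2) for every i ∈ Fin d and j ∈ Fin n, if λ_{i,j} > 0 then the sum of the entries of K over the hyperplane Γ_{i,j} equals 1. -/
open Finset

/-- The sum of the entries of `k` over the hyperplane `Γ_{i,j}`. -/
def hypSum {d n : ℕ} (k : (Fin d → Fin n) → ℝ) (i : Fin d) (j : Fin n) : ℝ :=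
  ∑ α ∈ Finset.univ.filter (fun α : Fin d → Fin n => α i = j), k α

/-- `k` is a polyplex of weight `W` in the `d`-dimensional (0,1)-matrix `A` of order `n`. -/
def IsPolyplex {d n : ℕ} (A : (Fin d → Fin n) → Bool) (k : (Fin d → Fin n) → ℝ) (W : ℝ) : Prop :=
  (∀ α, 0 ≤ k α) ∧ (∀ α, A α = false → k α = 0) ∧
  (∀ i j, hypSum k i j ≤ 1) ∧ (∑ α, k α) = W

/-- `k` is a polydiagonal in `A`: a nonnegative weighting of the support whose sum over
every hyperplane equals `1`. -/
def IsPolydiagonal {d n : ℕ} (A : (Fin d → Fin n) → Bool) (k : (Fin d → Fin n) → ℝ) : Prop :=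
  (∀ α, 0 ≤ k α) ∧ (∀ α, A α = false → k α = 0) ∧ (∀ i j, hypSum k i j = 1)

def HasPolydiagonal {d n : ℕ} (A : (Fin d → Fin n) → Bool) : Prop :=
  ∃ k, IsPolydiagonal A k

/-- The matrix obtained from `A` by additionally setting the entry at `β` to `1`. -/
def addEntry {d n : ℕ} (A : (Fin d → Fin n) → Bool) (β : Fin d → Fin n) :
    (Fin d → Fin n) → Bool :=
  fun α => if α = β then true else A α

/-- `A` is extremal: it has no polydiagonal, and adding any entry creates one. -/
def IsExtremal {d n : ℕ} (A : (Fin d → Fin n) → Bool) : Prop :=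
  ¬ HasPolydiagonal A ∧ ∀ β, A β = false → HasPolydiagonal (addEntry A β)

/-- `Λ` is a hyperplane cover of `A`. -/
def IsCover {d n : ℕ} (A : (Fin d → Fin n) → Bool) (Λ : Fin d → Fin n → ℝ) : Prop :=
  (∀ i j, 0 ≤ Λ i j) ∧ ∀ α, A α = true → 1 ≤ ∑ i, Λ i (α i)

/-- The weight of a hyperplane cover. -/
def coverWeight {d n : ℕ} (Λ : Fin d → Fin n → ℝ) : ℝ := ∑ i, ∑ j, Λ i j

/-- `Λ` is an optimal hyperplane cover of `A`: a cover of minimum weight. -/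
def IsOptimalCover {d n : ℕ} (A : (Fin d → Fin n) → Bool) (Λ : Fin d → Fin n → ℝ) : Prop :=
  IsCover A Λ ∧ ∀ Λ', IsCover A Λ' → coverWeight Λ ≤ coverWeight Λ'

/-- `A` is a threshold matrix. -/
def IsThreshold {d n : ℕ} (A : (Fin d → Fin n) → Bool) : Prop :=
  ∃ Λ : Fin d → Fin n → ℝ, (∀ i j, 0 ≤ Λ i j) ∧
    ∀ α, (A α = true ↔ 1 ≤ ∑ i, Λ i (α i))

/-- `A` and `B` are equivalent: `B` is obtained from `A` by permuting directions and
permuting parallel hyperplanes, i.e. `B(α) = A(β)` where `β (π i) = σ i (α i)`. -/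
def MatEquiv {d n : ℕ} (A B : (Fin d → Fin n) → Bool) : Prop :=
  ∃ (π : Equiv.Perm (Fin d)) (σ : Fin d → Equiv.Perm (Fin n)),
    ∀ α, B α = A (fun j => σ (π.symm j) (α (π.symm j)))

/-- The rate of the hyperplane `Γ_{i,j}` of `A`: the number of ones it contains. -/
def rate {d n : ℕ} (A : (Fin d → Fin n) → Bool) (i : Fin d) (j : Fin n) : ℕ :=
  (Finset.univ.filter (fun α : Fin d → Fin n => A α = true ∧ α i = j)).card

/-- The profile of `A`: the multiset of the rates of all its `d·n` hyperplanes. -/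
def profile {d n : ℕ} (A : (Fin d → Fin n) → Bool) : Multiset ℕ :=
  (Finset.univ : Finset (Fin d × Fin n)).val.map (fun p => rate A p.1 p.2)

/-!
Polyplexes and hyperplane covers are the feasible points of a pair of dual linear programs whose
matrix is the incidence matrix of hyperplanes and indices, so the theorem is complementary
slackness for linear programming. Strong duality rests on Farkas' lemma, proved by induction on the
number of functionals. For optimal `x` and `y` it closes the chain
`c ⬝ᵥ x ≤ (y ᵥ* M) ⬝ᵥ x = y ⬝ᵥ (M *ᵥ x) ≤ y ⬝ᵥ b` into equalities; both inequalities hold term by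
term, hence so do the equalities.
-/

open Matrix

section ComplementarySlackness

variable {R ι κ : Type*} [CommRing R] [LinearOrder R] [Fintype ι] [Fintype κ]

/-- `x` is feasible for the primal program: maximise `c ⬝ᵥ x` subject to `0 ≤ x`, `M *ᵥ x ≤ b`. -/
def IsPrimalFeasible (M : Matrix ι κ R) (b : ι → R) (x : κ → R) : Prop :=
  0 ≤ x ∧ M *ᵥ x ≤ b

/-- `y` is feasible for the dual program: minimise `y ⬝ᵥ b` subject to `0 ≤ y`, `c ≤ y ᵥ* M`. -/
def IsDualFeasible (M : Matrix ι κ R) (c : κ → R) (y : ι → R) : Prop :=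
  0 ≤ y ∧ c ≤ y ᵥ* M

variable [IsStrictOrderedRing R] {M : Matrix ι κ R} {b y : ι → R} {c x : κ → R}

theorem eq_of_dotProduct_le_of_pos {u v w : κ → R} (huv : u ≤ v) (hw : 0 ≤ w)
    (h : v ⬝ᵥ w ≤ u ⬝ᵥ w) {j : κ} (hj : 0 < w j) : u j = v j := by
  have hle : ∀ j ∈ univ, u j * w j ≤ v j * w j := fun j _ =>
    mul_le_mul_of_nonneg_right (huv j) (hw j)
  have hsum := (sum_eq_sum_iff_of_le hle).1 (le_antisymm (sum_le_sum hle) h)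
  exact mul_right_cancel₀ hj.ne' (hsum j (mem_univ j))

theorem complementary_slackness_of_dotProduct_le (hx : IsPrimalFeasible M b x)
    (hy : IsDualFeasible M c y) (h : y ⬝ᵥ b ≤ c ⬝ᵥ x) :
    (∀ j, 0 < x j → (y ᵥ* M) j = c j) ∧ ∀ i, 0 < y i → (M *ᵥ x) i = b i := by
  have hcx : c ⬝ᵥ x ≤ y ᵥ* M ⬝ᵥ x := dotProduct_le_dotProduct_of_nonneg_right hy.2 hx.1
  have hMx : y ᵥ* M ⬝ᵥ x = M *ᵥ x ⬝ᵥ y := by rw [← dotProduct_mulVec, dotProduct_comm]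
  have hyb : M *ᵥ x ⬝ᵥ y ≤ b ⬝ᵥ y := dotProduct_le_dotProduct_of_nonneg_right hx.2 hy.1
  rw [dotProduct_comm] at h
  exact ⟨fun j hj => (eq_of_dotProduct_le_of_pos hy.2 hx.1 (by linarith) hj).symm,
    fun i hi => eq_of_dotProduct_le_of_pos hx.2 hy.1 (by linarith) hi⟩

end ComplementarySlackness

section StrongDuality

theorem exists_nonneg_eq_sum_insert {R ι V : Type*} [Semiring R] [Preorder R]
    [AddCommMonoid V] [Module R V] [DecidableEq ι] {s : Finset ι} {j : ι} (hj : j ∉ s) (a : ι → V)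
    {r : R} {w : ι → R} (hr : 0 ≤ r) (hw : 0 ≤ w) :
    ∃ w' : ι → R, 0 ≤ w' ∧ r • a j + ∑ i ∈ s, w i • a i = ∑ i ∈ insert j s, w' i • a i := by
  refine ⟨Function.update w j r, le_update_iff.2 ⟨hr, fun i _ => hw i⟩, ?_⟩
  rw [sum_insert hj, Function.update_self]
  congr 1
  exact sum_congr rfl fun i hi => by rw [Function.update_of_ne (ne_of_mem_of_not_mem hi hj)]

variable {𝕜 ι κ V : Type*} [Field 𝕜] [LinearOrder 𝕜] [IsStrictOrderedRing 𝕜]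
  [AddCommGroup V] [Module 𝕜 V]

theorem farkas_sum_smul (s : Finset ι) (a : ι → Module.Dual 𝕜 V) (f : Module.Dual 𝕜 V)
    (h : ∀ v, (∀ i ∈ s, a i v ≤ 0) → f v ≤ 0) :
    ∃ w : ι → 𝕜, 0 ≤ w ∧ f = ∑ i ∈ s, w i • a i := by
  classical
  induction s using Finset.induction_on generalizing a f with
  | empty =>
    refine ⟨0, le_rfl, LinearMap.ext fun v => le_antisymm (h v (by simp)) ?_⟩
    simpa using h (-v) (by simp)
  | insert j s hj ih =>
    by_cases hs : ∀ v, (∀ i ∈ s, a i v ≤ 0) → f v ≤ 0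
    · obtain ⟨w, hw, rfl⟩ := ih a f hs
      simpa only [zero_smul, zero_add] using exists_nonneg_eq_sum_insert hj a le_rfl hw
    push Not at hs
    obtain ⟨u, hau, hfu⟩ := hs
    have hju : 0 < a j u := by
      by_contra! hju
      exact hfu.not_ge (h u (forall_mem_insert _ _ _ |>.2 ⟨hju, hau⟩))
    -- Precomposition with the projection along `u` onto the kernel of `a j` eliminates `a j`.
    let proj : V →ₗ[𝕜] V := LinearMap.id - ((a j u)⁻¹ • a j).smulRight u
    have proj_apply (v : V) : proj v = v - ((a j u)⁻¹ * a j v) • u := rfl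
    have hproj_ker (v : V) : a j (proj v) = 0 := by simp [proj_apply, hju.ne', mul_right_comm]
    obtain ⟨w, hw, hfw⟩ := ih (fun i => a i ∘ₗ proj) (f ∘ₗ proj) fun v hv =>
      h (proj v) (forall_mem_insert _ _ _ |>.2 ⟨(hproj_ker v).le, hv⟩)
    let g : Module.Dual 𝕜 V := ∑ i ∈ s, w i • a i
    have hgu : g u ≤ 0 := by
      simpa [g] using sum_nonpos fun i hi => mul_nonpos_of_nonneg_of_nonpos (hw i) (hau i hi)
    have hfg : f = ((f u - g u) * (a j u)⁻¹) • a j + g := by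
      ext v
      have hfgv : f (proj v) = g (proj v) := by simpa [g] using LinearMap.congr_fun hfw v
      simp only [proj_apply, map_sub, map_smul, smul_eq_mul] at hfgv
      simp only [LinearMap.add_apply, LinearMap.smul_apply, smul_eq_mul]
      linear_combination hfgv
    rw [hfg]
    exact exists_nonneg_eq_sum_insert hj a
      (mul_nonneg (sub_nonneg.2 (hgu.trans hfu.le)) (inv_nonneg.2 hju.le)) hw

theorem farkas_vecMul [Fintype ι] [Fintype κ] (M : Matrix ι κ 𝕜) (c : κ → 𝕜)
    (h : ∀ x, 0 ≤ x → M *ᵥ x ≤ 0 → c ⬝ᵥ x ≤ 0) : ∃ y, 0 ≤ y ∧ c ≤ y ᵥ* M := by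
  classical
  let a : ι ⊕ κ → Module.Dual 𝕜 (κ → 𝕜) :=
    Sum.elim (fun i => dotProductBilin 𝕜 𝕜 (M i)) fun j => -LinearMap.proj j
  obtain ⟨w, hw, hc⟩ := farkas_sum_smul univ a (dotProductBilin 𝕜 𝕜 c) fun x hx =>
    h x (fun j => by simpa [a] using hx (.inr j) (mem_univ _)) fun i => hx (.inl i) (mem_univ _)
  refine ⟨w ∘ Sum.inl, fun i => hw (.inl i), fun j => ?_⟩
  have hcj : c j = ((w ∘ Sum.inl) ᵥ* M) j - w (.inr j) := by
    simpa [a, Fintype.sum_sum_type, vecMul, dotProduct, Pi.single_apply, sub_eq_add_neg] using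
      LinearMap.congr_fun hc (Pi.single j 1)
  exact hcj.trans_le (sub_le_self _ (hw (.inr j)))

variable [Fintype κ] {M : Matrix ι κ 𝕜} {b : ι → 𝕜} {c x : κ → 𝕜} {W : 𝕜}

theorem dotProduct_nonpos_of_mulVec_nonpos (hx : IsPrimalFeasible M b x)
    (hW : ∀ x', IsPrimalFeasible M b x' → c ⬝ᵥ x' ≤ W) {z : κ → 𝕜} (hz : 0 ≤ z)
    (hMz : M *ᵥ z ≤ 0) : c ⬝ᵥ z ≤ 0 := by
  by_contra! hcz
  let t : 𝕜 := (W - c ⬝ᵥ x + 1) / (c ⬝ᵥ z)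
  have ht : 0 ≤ t := div_nonneg (by linarith [hW x hx]) hcz.le
  have hfeasible : IsPrimalFeasible M b (x + t • z) := by
    refine ⟨add_nonneg hx.1 (smul_nonneg ht hz), ?_⟩
    rw [mulVec_add, mulVec_smul]
    exact (add_le_of_nonpos_right (smul_nonpos_of_nonneg_of_nonpos ht hMz)).trans hx.2
  have hvalue : c ⬝ᵥ (x + t • z) = W + 1 := by
    rw [dotProduct_add, dotProduct_smul, smul_eq_mul, div_mul_cancel₀ _ hcz.ne']
    ring
  linarith [hW _ hfeasible]

theorem dotProduct_le_mul_of_mulVec_le_smul (hx : IsPrimalFeasible M b x)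
    (hW : ∀ x', IsPrimalFeasible M b x' → c ⬝ᵥ x' ≤ W) {z : κ → 𝕜} {r : 𝕜} (hz : 0 ≤ z)
    (hr : 0 ≤ r) (hMz : M *ᵥ z ≤ r • b) : c ⬝ᵥ z ≤ r * W := by
  obtain rfl | hr := hr.eq_or_lt
  · rw [zero_smul] at hMz
    rw [zero_mul]
    exact dotProduct_nonpos_of_mulVec_nonpos hx hW hz hMz
  · have hfeasible : IsPrimalFeasible M b (r⁻¹ • z) := by
      refine ⟨smul_nonneg (inv_nonneg.2 hr.le) hz, ?_⟩
      rw [mulVec_smul]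
      exact (inv_smul_le_iff_of_pos hr).2 hMz
    have hvalue := hW _ hfeasible
    rwa [dotProduct_smul, smul_eq_mul, inv_mul_le_iff₀ hr] at hvalue

variable [Fintype ι] {y : ι → 𝕜}

theorem exists_isDualFeasible_dotProduct_le (hx : IsPrimalFeasible M b x)
    (hW : ∀ x', IsPrimalFeasible M b x' → c ⬝ᵥ x' ≤ W) :
    ∃ y, IsDualFeasible M c y ∧ y ⬝ᵥ b ≤ W := by
  -- The dual constraints and `y ⬝ᵥ b ≤ W` together are the system `Sum.elim c (-W) ≤ y ᵥ* M'`.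
  let M' : Matrix ι (κ ⊕ Unit) 𝕜 := fromCols M (replicateCol Unit (-b))
  have hM' (z : κ ⊕ Unit → 𝕜) : M' *ᵥ z = M *ᵥ (z ∘ Sum.inl) - z (.inr ()) • b := by
    ext i
    simp [M', mulVec, dotProduct, mul_comm, sub_eq_add_neg]
  have hc' (z : κ ⊕ Unit → 𝕜) :
      Sum.elim c (fun _ => -W) ⬝ᵥ z = c ⬝ᵥ (z ∘ Sum.inl) - z (.inr ()) * W := by
    simp [dotProduct, mul_comm, sub_eq_add_neg]
  obtain ⟨y, hy, hyM'⟩ := farkas_vecMul M' (Sum.elim c fun _ => -W) fun z hz hMz => by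
    rw [hM', sub_nonpos] at hMz
    rw [hc', sub_nonpos]
    exact dotProduct_le_mul_of_mulVec_le_smul hx hW (fun j => hz (.inl j)) (hz (.inr ())) hMz
  rw [vecMul_fromCols] at hyM'
  refine ⟨y, ⟨hy, fun j => hyM' (.inl j)⟩, ?_⟩
  simpa [vecMul, dotProduct] using hyM' (.inr ())

theorem complementary_slackness (hx : IsPrimalFeasible M b x)
    (hxmax : ∀ x', IsPrimalFeasible M b x' → c ⬝ᵥ x' ≤ c ⬝ᵥ x) (hy : IsDualFeasible M c y)
    (hymin : ∀ y', IsDualFeasible M c y' → y ⬝ᵥ b ≤ y' ⬝ᵥ b) :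
    (∀ j, 0 < x j → (y ᵥ* M) j = c j) ∧ ∀ i, 0 < y i → (M *ᵥ x) i = b i := by
  obtain ⟨y', hy', hy'b⟩ := exists_isDualFeasible_dotProduct_le hx hxmax
  exact complementary_slackness_of_dotProduct_le hx hy ((hymin y' hy').trans hy'b)

end StrongDuality

section Hyperplanes

variable {d n : ℕ} {A : (Fin d → Fin n) → Bool} {k : (Fin d → Fin n) → ℝ} {W : ℝ}

/-- The incidence matrix of hyperplanes and indices; the row `(i, j)` is the hyperplane
`Γ_{i,j}`. -/
def hyperplaneIncidence (d n : ℕ) : Matrix (Fin d × Fin n) (Fin d → Fin n) ℝ :=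
  of fun p α => if α p.1 = p.2 then 1 else 0

/-- The (0,1)-matrix `A` as a real vector, the objective of the linear program of polyplexes.
Entries outside the support stay among the variables of the program, with objective `0`. -/
def supportVec (A : (Fin d → Fin n) → Bool) : (Fin d → Fin n) → ℝ :=
  fun α => if A α then 1 else 0

theorem hyperplaneIncidence_mulVec (k : (Fin d → Fin n) → ℝ) (i : Fin d) (j : Fin n) :
    (hyperplaneIncidence d n *ᵥ k) (i, j) = hypSum k i j := by
  simp [hyperplaneIncidence, mulVec, dotProduct, hypSum, sum_filter]

theorem vecMul_hyperplaneIncidence (Λ : Fin d → Fin n → ℝ) (α : Fin d → Fin n) :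
    (Function.uncurry Λ ᵥ* hyperplaneIncidence d n) α = ∑ i, Λ i (α i) := by
  simp [hyperplaneIncidence, vecMul, dotProduct, Fintype.sum_prod_type]

theorem uncurry_dotProduct_one (Λ : Fin d → Fin n → ℝ) :
    Function.uncurry Λ ⬝ᵥ 1 = coverWeight Λ := by
  simp [coverWeight, dotProduct_one, Fintype.sum_prod_type]

theorem isCover_iff_isDualFeasible (A : (Fin d → Fin n) → Bool) (Λ : Fin d → Fin n → ℝ) :
    IsCover A Λ ↔ IsDualFeasible (hyperplaneIncidence d n) (supportVec A) (Function.uncurry Λ) := by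
  simp only [IsCover, IsDualFeasible, Pi.le_def, Prod.forall, vecMul_hyperplaneIncidence]
  refine and_congr_right fun hΛ => forall_congr' fun α => ?_
  cases hα : A α <;> simp [supportVec, hα, sum_nonneg fun i _ => hΛ i (α i)]

theorem IsPolyplex.isPrimalFeasible (hk : IsPolyplex A k W) :
    IsPrimalFeasible (hyperplaneIncidence d n) 1 k :=
  ⟨hk.1, fun p => (hyperplaneIncidence_mulVec k p.1 p.2).trans_le (hk.2.2.1 p.1 p.2)⟩

theorem IsPolyplex.supportVec_dotProduct (hk : IsPolyplex A k W) : supportVec A ⬝ᵥ k = W := by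
  obtain ⟨-, hsupp, -, rfl⟩ := hk
  refine sum_congr rfl fun α _ => ?_
  cases hα : A α <;> simp [supportVec, hα, hsupp]

theorem IsPrimalFeasible.isPolyplex_supportVec_mul (A : (Fin d → Fin n) → Bool)
    (hk : IsPrimalFeasible (hyperplaneIncidence d n) 1 k) :
    IsPolyplex A (supportVec A * k) (supportVec A ⬝ᵥ k) := by
  have hnonneg (α) : 0 ≤ (supportVec A * k) α :=
    mul_nonneg (by unfold supportVec; positivity) (hk.1 α)
  have hle (α) : (supportVec A * k) α ≤ k α :=
    mul_le_of_le_one_left (hk.1 α) (by unfold supportVec; split_ifs <;> simp)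
  refine ⟨hnonneg, fun α hα => by simp [supportVec, hα], fun i j => ?_, rfl⟩
  calc hypSum (supportVec A * k) i j ≤ hypSum k i j := sum_le_sum fun α _ => hle α
    _ = (hyperplaneIncidence d n *ᵥ k) (i, j) := (hyperplaneIncidence_mulVec k i j).symm
    _ ≤ 1 := hk.2 (i, j)

end Hyperplanes

/-- Complementary slackness between an optimal hyperplane cover and an optimal polyplex. -/
theorem stmt_0 {d n : ℕ} (A : (Fin d → Fin n) → Bool) (Λ : Fin d → Fin n → ℝ)
    (k : (Fin d → Fin n) → ℝ) (W : ℝ)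
    (hΛ : IsOptimalCover A Λ) (hk : IsPolyplex A k W)
    (hmax : IsGreatest {W' | ∃ k', IsPolyplex A k' W'} W) :
    (∀ α, 0 < k α → ∑ i, Λ i (α i) = 1) ∧
    (∀ i j, 0 < Λ i j → hypSum k i j = 1) := by
  have hkmax (k') (hk' : IsPrimalFeasible (hyperplaneIncidence d n) 1 k') :
      supportVec A ⬝ᵥ k' ≤ supportVec A ⬝ᵥ k :=
    hk.supportVec_dotProduct ▸ hmax.2 ⟨_, hk'.isPolyplex_supportVec_mul A⟩
  have hΛmin (y) (hy : IsDualFeasible (hyperplaneIncidence d n) (supportVec A) y) :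
      Function.uncurry Λ ⬝ᵥ 1 ≤ y ⬝ᵥ 1 := by
    rw [← Function.uncurry_curry y] at hy ⊢
    simpa only [uncurry_dotProduct_one] using hΛ.2 _ ((isCover_iff_isDualFeasible A _).2 hy)
  obtain ⟨hindex, hhyperplane⟩ := complementary_slackness hk.isPrimalFeasible hkmax
    ((isCover_iff_isDualFeasible A Λ).1 hΛ.1) hΛmin
  refine ⟨fun α hα => ?_, fun i j hij => ?_⟩
  · have hAα : A α = true := Bool.eq_true_of_not_eq_false fun hAα => hα.ne' (hk.2.1 α hAα)
    rw [← vecMul_hyperplaneIncidence, hindex α hα, supportVec, if_pos hAα]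
  · rw [← hyperplaneIncidence_mulVec, hhyperplane (i, j) hij, Pi.one_apply]
end

section
/- If A is a d-dimensional extremal (0,1)-matrix of order n and Λ = (λ_{i,j}) is an optimal hyperplane cover of A, then A = A(Λ), i.e., for every index α one has A(α) = 1 if and only if Σ_{i ∈ Fin d} λ_{i, α_i} ≥ 1. In particular, every extremal matrix is a threshold matrix. -/
open Finset

/-!
By linear programming duality, a matrix of order `n` and dimension `d > 0` has a polydiagonal
exactly when every hyperplane cover has weight at least `n`; the nontrivial direction separates
the constant table `1 / n` from the convex hull of the incidence tables of the support. Let `Λ` be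
an optimal cover of an extremal matrix `A`; its weight is less than `n`. If an entry `β` outside the
support satisfied `∑ i, Λ i (β i) ≥ 1`, then `Λ` would also cover `addEntry A β`, which has a
polydiagonal, and its weight would be at least `n`.
-/

lemma exists_nonneg_sum_smul_eq_of_mem_convexHull_image {𝕜 ι E : Type*} [Semiring 𝕜]
    [PartialOrder 𝕜] [IsOrderedRing 𝕜] [AddCommMonoid E] [Module 𝕜 E] [Fintype ι]
    {v : ι → E} {s : Set ι} {x : E} (hx : x ∈ convexHull 𝕜 (v '' s)) :
    ∃ w : ι → 𝕜, (∀ i, 0 ≤ w i) ∧ (∀ i ∉ s, w i = 0) ∧ ∑ i, w i • v i = x := by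
  classical
  refine convexHull_min (t := {x | ∃ w : ι → 𝕜,
    (∀ i, 0 ≤ w i) ∧ (∀ i ∉ s, w i = 0) ∧ ∑ i, w i • v i = x}) ?_ ?_ hx
  · rintro _ ⟨i, hi, rfl⟩
    have single_nonneg : (0 : ι → 𝕜) ≤ Pi.single i 1 := Pi.single_nonneg.2 zero_le_one
    refine ⟨Pi.single i 1, single_nonneg, fun j hj => ?_, ?_⟩
    · exact Pi.single_eq_of_ne (ne_of_mem_of_not_mem hi hj).symm _
    · simp [Pi.single_apply]
  · rintro _ ⟨w, hw, hws, rfl⟩ _ ⟨w', hw', hws', rfl⟩ a b ha hb -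
    refine ⟨a • w + b • w', fun i => ?_, fun i hi => ?_, ?_⟩
    · exact add_nonneg (mul_nonneg ha (hw i)) (mul_nonneg hb (hw' i))
    · simp [hws i hi, hws' i hi]
    · simp [add_smul, mul_smul, sum_add_distrib, smul_sum]

lemma map_eq_sum_sum_smul_single {ι κ R M F : Type*} [Fintype ι] [Fintype κ] [DecidableEq ι]
    [DecidableEq κ] [Semiring R] [AddCommMonoid M] [Module R M] [FunLike F (ι → κ → R) M]
    [LinearMapClass F R (ι → κ → R) M] (f : F) (x : ι → κ → R) :
    f x = ∑ i, ∑ j, x i j • f (Pi.single i (Pi.single j 1)) := by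
  have hx : x = ∑ i, ∑ j, x i j • (Pi.single i (Pi.single j 1) : ι → κ → R) := by
    ext a b
    simp [Finset.sum_apply, Pi.single_apply, ite_apply]
  conv_lhs => rw [hx]
  simp only [map_sum, map_smul]

section Duality

variable {d n : ℕ} {A : (Fin d → Fin n) → Bool} {k : (Fin d → Fin n) → ℝ}
  {Λ : Fin d → Fin n → ℝ} {β : Fin d → Fin n}

/-- The incidence table of an index `α`: the entry at `(i, j)` is `1` if `α` lies on the hyperplane
`Γ_{i,j}` and `0` otherwise. It makes the hyperplane sums of `k` the linear combination
`∑ α, k α • incidence α`. -/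
def incidence (α : Fin d → Fin n) : Fin d → Fin n → ℝ := fun i => Pi.single (α i) 1

lemma hypSum_eq_sum_smul_incidence (k : (Fin d → Fin n) → ℝ) :
    hypSum k = ∑ α, k α • incidence α := by
  ext i j
  simp [hypSum, incidence, Finset.sum_apply, Pi.single_apply, sum_filter, eq_comm]

lemma sum_hypSum (k : (Fin d → Fin n) → ℝ) (i : Fin d) : ∑ j, hypSum k i j = ∑ α, k α := by
  simp only [hypSum, sum_fiberwise]

lemma sum_hypSum_mul (k : (Fin d → Fin n) → ℝ) (Λ : Fin d → Fin n → ℝ) :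
    ∑ i, ∑ j, hypSum k i j * Λ i j = ∑ α, k α * ∑ i, Λ i (α i) := by
  have fiberwise (i : Fin d) : ∑ j, hypSum k i j * Λ i j = ∑ α, k α * Λ i (α i) := by
    rw [← sum_fiberwise univ fun α : Fin d → Fin n => α i]
    refine sum_congr rfl fun j _ => ?_
    rw [hypSum, sum_mul]
    exact sum_congr rfl fun α hα => by rw [(mem_filter.1 hα).2]
  simp_rw [fiberwise, mul_sum]
  exact sum_comm

lemma ne_zero_of_not_hasPolydiagonal (h : ¬ HasPolydiagonal A) : d ≠ 0 ∧ n ≠ 0 := by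
  constructor <;> rintro rfl <;> refine h ⟨0, by simp, by simp, ?_⟩
  · exact fun i => i.elim0
  · exact fun _ j => j.elim0

lemma IsPolydiagonal.sum_eq (hk : IsPolydiagonal A k) (hd : d ≠ 0) : ∑ α, k α = n := by
  rw [← sum_hypSum k ⟨0, Nat.pos_of_ne_zero hd⟩]
  simp [hk.2.2]

lemma IsPolydiagonal.le_coverWeight (hk : IsPolydiagonal A k) (hd : d ≠ 0) (hΛ : IsCover A Λ) :
    n ≤ coverWeight Λ := by
  have k_sum := hk.sum_eq hd
  obtain ⟨k_nonneg, k_off_support, hypSum_eq_one⟩ := hk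
  calc (n : ℝ) = ∑ α, k α := k_sum.symm
    _ ≤ ∑ α, k α * ∑ i, Λ i (α i) := by
      refine sum_le_sum fun α _ => ?_
      cases hα : A α with
      | false => simp [k_off_support α hα]
      | true => exact le_mul_of_one_le_right (k_nonneg α) (hΛ.2 α hα)
    _ = ∑ i, ∑ j, hypSum k i j * Λ i j := (sum_hypSum_mul k Λ).symm
    _ = coverWeight Λ := by simp [hypSum_eq_one, coverWeight]

lemma hasPolydiagonal_of_mem_convexHull
    (h : (fun _ _ => (n : ℝ)⁻¹) ∈ convexHull ℝ (incidence '' {α | A α = true})) :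
    HasPolydiagonal A := by
  obtain ⟨w, w_nonneg, w_off_support, hw⟩ := exists_nonneg_sum_smul_eq_of_mem_convexHull_image h
  refine ⟨(n : ℝ) • w, fun α => ?_, fun α hα => ?_, fun i j => ?_⟩
  · exact mul_nonneg n.cast_nonneg (w_nonneg α)
  · simp [w_off_support α (by simp [hα])]
  · have hn : (n : ℝ) ≠ 0 := Nat.cast_ne_zero.2 j.pos.ne'
    have hypSum_smul : hypSum ((n : ℝ) • w) = (n : ℝ) • fun _ _ => (n : ℝ)⁻¹ := by
      simp only [hypSum_eq_sum_smul_incidence, ← hw, smul_sum, smul_smul, Pi.smul_apply,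
        smul_eq_mul]
    simp [hypSum_smul, hn]

lemma exists_coverWeight_lt_mul_of_not_hasPolydiagonal (h : ¬ HasPolydiagonal A) :
    ∃ (Λ : Fin d → Fin n → ℝ) (u : ℝ),
      (∀ α, A α = true → u ≤ ∑ i, Λ i (α i)) ∧ coverWeight Λ < n * u := by
  have hn : (0 : ℝ) < n := Nat.cast_pos.2 (Nat.pos_of_ne_zero (ne_zero_of_not_hasPolydiagonal h).2)
  obtain ⟨f, u, f_const_lt, lt_f⟩ := geometric_hahn_banach_point_closed (convex_convexHull ℝ _)
    ((Set.toFinite _).isClosed_convexHull ℝ) (mt hasPolydiagonal_of_mem_convexHull h)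
  refine ⟨fun i j => f (Pi.single i (Pi.single j 1)), u, fun α hα => ?_, ?_⟩
  · have u_lt := lt_f _ (subset_convexHull ℝ _ (Set.mem_image_of_mem incidence hα))
    rw [map_eq_sum_sum_smul_single f] at u_lt
    simpa [incidence, Pi.single_apply] using u_lt.le
  · rw [map_eq_sum_sum_smul_single f] at f_const_lt
    simpa only [coverWeight, smul_eq_mul, ← mul_sum, inv_mul_lt_iff₀ hn] using f_const_lt

-- Adding a large constant `c` to all entries of `Λ` and `d * c` to the threshold `u` preserves both
-- inequalities and makes everything nonnegative; dividing by the new threshold then gives a cover.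
lemma exists_isCover_coverWeight_lt {u : ℝ} (hd : d ≠ 0)
    (hu : ∀ α, A α = true → u ≤ ∑ i, Λ i (α i)) (hΛ : coverWeight Λ < n * u) :
    ∃ Λ', IsCover A Λ' ∧ coverWeight Λ' < n := by
  have hd' : (0 : ℝ) < d := Nat.cast_pos.2 (Nat.pos_of_ne_zero hd)
  obtain ⟨c, entries_ge, threshold_pos⟩ : ∃ c : ℝ, (∀ i j, -Λ i j ≤ c) ∧ -u / d < c :=
    ((Filter.eventually_all.2 fun i => Filter.eventually_all.2 fun j =>
      Filter.eventually_ge_atTop (-Λ i j)).and (Filter.eventually_gt_atTop (-u / d))).exists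
  replace threshold_pos : 0 < u + d * c := by
    rw [div_lt_iff₀ hd'] at threshold_pos
    linarith
  refine ⟨fun i j => (Λ i j + c) / (u + d * c), ⟨fun i j => ?_, fun α hα => ?_⟩, ?_⟩
  · exact div_nonneg (by linarith [entries_ge i j]) threshold_pos.le
  · rw [← sum_div, one_le_div threshold_pos]
    simpa [sum_add_distrib] using hu α hα
  · calc coverWeight (fun i j => (Λ i j + c) / (u + d * c))
        = (coverWeight Λ + d * (n * c)) / (u + d * c) := by
          simp [coverWeight, ← sum_div, sum_add_distrib]
      _ < n := by
          rw [div_lt_iff₀ threshold_pos]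
          linarith

theorem hasPolydiagonal_iff_forall_le_coverWeight (hd : d ≠ 0) :
    HasPolydiagonal A ↔ ∀ Λ, IsCover A Λ → n ≤ coverWeight Λ := by
  refine ⟨fun ⟨k, hk⟩ Λ hΛ => hk.le_coverWeight hd hΛ, fun h => ?_⟩
  by_contra hA
  obtain ⟨Λ, u, hu, hΛ⟩ := exists_coverWeight_lt_mul_of_not_hasPolydiagonal hA
  obtain ⟨Λ', hcover, hlt⟩ := exists_isCover_coverWeight_lt hd hu hΛ
  exact (h Λ' hcover).not_gt hlt

lemma IsOptimalCover.coverWeight_lt (hΛ : IsOptimalCover A Λ) (hA : ¬ HasPolydiagonal A) :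
    coverWeight Λ < n := by
  rw [hasPolydiagonal_iff_forall_le_coverWeight (ne_zero_of_not_hasPolydiagonal hA).1] at hA
  push Not at hA
  obtain ⟨Λ', hcover, hlt⟩ := hA
  exact (hΛ.2 Λ' hcover).trans_lt hlt

lemma IsCover.addEntry_of_one_le_sum (hΛ : IsCover A Λ) (hβ : 1 ≤ ∑ i, Λ i (β i)) :
    IsCover (addEntry A β) Λ := by
  refine ⟨hΛ.1, fun α hα => ?_⟩
  by_cases h : α = β
  · rwa [h]
  · exact hΛ.2 α (by simpa [addEntry, h] using hα)

theorem IsExtremal.eq_true_iff_one_le_sum (hA : IsExtremal A) (hΛ : IsCover A Λ)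
    (hlt : coverWeight Λ < n) (α : Fin d → Fin n) : A α = true ↔ 1 ≤ ∑ i, Λ i (α i) := by
  refine ⟨hΛ.2 α, fun hα => ?_⟩
  by_contra hAα
  have hd : d ≠ 0 := (ne_zero_of_not_hasPolydiagonal hA.1).1
  have n_le_coverWeight := (hasPolydiagonal_iff_forall_le_coverWeight hd).1
    (hA.2 α (by simpa using hAα)) Λ (hΛ.addEntry_of_one_le_sum hα)
  exact n_le_coverWeight.not_gt hlt

end Duality

/-- If Λ is an optimal hyperplane cover of an extremal matrix A, then A = A(Λ);
in particular every extremal matrix is a threshold matrix. -/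
theorem stmt_2 {d n : ℕ} (A : (Fin d → Fin n) → Bool) (Λ : Fin d → Fin n → ℝ)
    (hA : IsExtremal A) (hΛ : IsOptimalCover A Λ) :
    (∀ α, A α = true ↔ 1 ≤ ∑ i, Λ i (α i)) ∧ IsThreshold A := by
  have threshold := hA.eq_true_iff_one_le_sum hΛ.1 (hΛ.coverWeight_lt hA.1)
  exact ⟨threshold, Λ, hΛ.1.1, threshold⟩
end

section
/- For all integers d ≥ 2 and n ≥ 1, the number of equivalence classes of d-dimensional threshold (0,1)-matrices of order n is at most n^{n·d·(d−1)} + 1. -/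
open Finset

/-!
A threshold matrix is determined by the rates of its hyperplanes. Indeed, if `Λ` is a threshold
table of `A`, the ones of `A` are the positions where `α ↦ ∑ i, Λ i (α i) - 1` is nonnegative, hence
the largest set over which this function has maximal sum, and the sum over the ones of a matrix
depends on its rates only. So, up to permuting parallel hyperplanes, `A` is determined by `d`
multisets of `n` rates in `{0, …, n ^ (d - 1)}`, which leaves at most
`(n ^ (d - 1) + n).choose n ^ d` classes. This is at most `n ^ (n * d * (d - 1))` unless `n = 1` or
`n = d = 2`, and then the total number `2 ^ n ^ d` of matrices is small enough.
-/

lemma subset_of_sum_le_sum_of_mem_iff_nonneg {ι M : Type*} [AddCommMonoid M] [LinearOrder M]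
    [IsOrderedCancelAddMonoid M] {f : ι → M} {s t : Finset ι} (hf : ∀ i, i ∈ s ↔ 0 ≤ f i)
    (hst : ∑ i ∈ s, f i ≤ ∑ i ∈ t, f i) : t ⊆ s := by
  classical
  by_contra h
  have sdiff_neg : ∑ i ∈ t \ s, f i < 0 :=
    sum_neg (fun i hi => not_le.1 fun h0 => (mem_sdiff.1 hi).2 ((hf i).2 h0))
      (sdiff_nonempty.2 h)
  have inter_le : ∑ i ∈ t ∩ s, f i ≤ ∑ i ∈ s, f i :=
    sum_le_sum_of_subset_of_nonneg inter_subset_right fun i hi _ => (hf i).1 hi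
  refine hst.not_gt ?_
  calc ∑ i ∈ t, f i = ∑ i ∈ t ∩ s, f i + ∑ i ∈ t \ s, f i := (sum_inter_add_sum_sdiff t s f).symm
    _ < ∑ i ∈ t ∩ s, f i := add_lt_of_neg_right _ sdiff_neg
    _ ≤ ∑ i ∈ s, f i := inter_le

lemma exists_equiv_of_map_univ_val_eq {α β γ : Type*} [Fintype α] [Fintype β]
    {f : α → γ} {g : β → γ} (h : univ.val.map f = univ.val.map g) :
    ∃ e : α ≃ β, ∀ a, g (e a) = f a := by
  classical
  have card_fiber (c : γ) : Fintype.card {a // f a = c} = Fintype.card {b // g b = c} := by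
    have count_eq := congrArg (Multiset.count c) h
    rw [Multiset.count_map, Multiset.count_map] at count_eq
    simpa only [Fintype.card_subtype, card_def, filter_val, eq_comm] using count_eq
  exact ⟨Equiv.ofFiberEquiv fun c => Fintype.equivOfCardEq (card_fiber c),
    Equiv.ofFiberEquiv_map _⟩

lemma card_quot_le_of_eq_imp_rel {α β : Type*} [Finite β] {r : α → α → Prop} (f : α → β)
    (hf : ∀ a b, f a = f b → r a b) : Nat.card (Quot r) ≤ Nat.card β := by
  refine Nat.card_le_card_of_injective (fun q : Quot r => f q.out) fun p q hpq => ?_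
  rw [← Quot.out_eq p, ← Quot.out_eq q]
  exact Quot.sound (hf _ _ hpq)

lemma choose_add_le_pow_of_le {N m n : ℕ} (hN : 2 ≤ N) (hm : 1 ≤ m)
    (base : (N + m).choose m ≤ N ^ m) (hmn : m ≤ n) : (N + n).choose n ≤ N ^ n := by
  induction n, hmn using Nat.le_induction with
  | base => exact base
  | succ k hk ih =>
    have factor_le : N + k + 1 ≤ N * (k + 1) := by nlinarith
    refine Nat.le_of_mul_le_mul_right ?_ k.succ_pos
    calc (N + k + 1).choose (k + 1) * (k + 1)
        = (N + k + 1) * (N + k).choose k := (Nat.add_one_mul_choose_eq _ _).symm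
      _ ≤ N * (k + 1) * N ^ k := Nat.mul_le_mul factor_le ih
      _ = N ^ (k + 1) * (k + 1) := by ring

lemma choose_add_two_le_sq {N : ℕ} (hN : 4 ≤ N) : (N + 2).choose 2 ≤ N ^ 2 := by
  have two_mul_choose : (N + 2) * (N + 1) = (N + 2).choose 2 * 2 := by
    simpa using Nat.add_one_mul_choose_eq (N + 1) 1
  nlinarith

lemma choose_add_le_pow {N n : ℕ} (hN : 3 ≤ N) (hn : 2 ≤ n) (hNn : 6 ≤ N + n) :
    (N + n).choose n ≤ N ^ n := by
  obtain rfl | hN4 := hN.eq_or_lt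
  · exact choose_add_le_pow_of_le (m := 3) (by omega) (by omega) (by decide) (by omega)
  · exact choose_add_le_pow_of_le (by omega) (by omega) (choose_add_two_le_sq hN4) hn

section Rate

variable {d n : ℕ} {A B : (Fin d → Fin n) → Bool}

/-- The support of a (0,1)-matrix: the set of positions of its ones. -/
def ones (A : (Fin d → Fin n) → Bool) : Finset (Fin d → Fin n) :=
  {α | A α = true}

lemma mem_ones {α : Fin d → Fin n} : α ∈ ones A ↔ A α = true := by
  simp [ones]

lemma ones_injective : Function.Injective (ones : ((Fin d → Fin n) → Bool) → _) :=
  fun A B h => funext fun α => Bool.eq_iff_iff.2 <| by rw [← mem_ones, h, mem_ones]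

lemma rate_eq_card_filter_ones (A : (Fin d → Fin n) → Bool) (i : Fin d) (j : Fin n) :
    rate A i j = #{α ∈ ones A | α i = j} := by
  rw [rate, ones, filter_filter]

lemma rate_le (A : (Fin d → Fin n) → Bool) (i : Fin d) (j : Fin n) :
    rate A i j ≤ n ^ (d - 1) :=
  calc rate A i j ≤ #{α : Fin d → Fin n | α i = j} :=
        card_le_card <| monotone_filter_right _ fun _ _ h => h.2
    _ = n ^ (d - 1) := by
        simpa using Fintype.card_filter_piFinset_const_eq_of_mem univ i (mem_univ j)

lemma rate_comp_piCongrRight (A : (Fin d → Fin n) → Bool) (σ : Fin d → Equiv.Perm (Fin n))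
    (i : Fin d) (j : Fin n) : rate (A ∘ Equiv.piCongrRight σ) i j = rate A i (σ i j) :=
  card_equiv (Equiv.piCongrRight σ) (by simp)

lemma sum_ones_apply_eq_sum_rate (A : (Fin d → Fin n) → Bool) (i : Fin d) {M : Type*}
    [AddCommMonoid M] (w : Fin n → M) : ∑ α ∈ ones A, w (α i) = ∑ j, rate A i j • w j := by
  simp_rw [rate_eq_card_filter_ones, ← sum_const, sum_fiberwise']

lemma card_ones_eq_sum_rate (A : (Fin d → Fin n) → Bool) (i : Fin d) :
    #(ones A) = ∑ j, rate A i j := by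
  simpa using sum_ones_apply_eq_sum_rate A i fun _ => (1 : ℕ)

lemma card_ones_eq_of_rate_eq [NeZero d] (h : ∀ i j, rate A i j = rate B i j) :
    #(ones A) = #(ones B) := by
  simp_rw [card_ones_eq_sum_rate _ (0 : Fin d), h]

lemma sum_ones_sub_one_eq_of_rate_eq [NeZero d] (h : ∀ i j, rate A i j = rate B i j)
    (Λ : Fin d → Fin n → ℝ) :
    ∑ α ∈ ones A, (∑ i, Λ i (α i) - 1) = ∑ α ∈ ones B, (∑ i, Λ i (α i) - 1) := by
  simp_rw [sum_sub_distrib, sum_const, card_ones_eq_of_rate_eq h]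
  rw [sum_comm, sum_comm (s := ones B)]
  simp_rw [sum_ones_apply_eq_sum_rate, h]

lemma IsThreshold.eq_of_rate_eq [NeZero d] (hA : IsThreshold A)
    (h : ∀ i j, rate A i j = rate B i j) : A = B := by
  obtain ⟨Λ, -, hΛ⟩ := hA
  have mem_ones_iff (α : Fin d → Fin n) : α ∈ ones A ↔ 0 ≤ ∑ i, Λ i (α i) - 1 := by
    rw [mem_ones, hΛ, sub_nonneg]
  have ones_subset : ones B ⊆ ones A :=
    subset_of_sum_le_sum_of_mem_iff_nonneg mem_ones_iff
      (sum_ones_sub_one_eq_of_rate_eq h Λ).le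
  exact ones_injective
    (eq_of_subset_of_card_le ones_subset (card_ones_eq_of_rate_eq h).le).symm

lemma IsThreshold.comp_piCongrRight (hA : IsThreshold A) (σ : Fin d → Equiv.Perm (Fin n)) :
    IsThreshold (A ∘ Equiv.piCongrRight σ) := by
  obtain ⟨Λ, hΛ0, hΛ⟩ := hA
  exact ⟨fun i j => Λ i (σ i j), fun i j => hΛ0 i (σ i j), fun α => hΛ fun i => σ i (α i)⟩

lemma matEquiv_comp_piCongrRight (A : (Fin d → Fin n) → Bool) (σ : Fin d → Equiv.Perm (Fin n)) :
    MatEquiv A (A ∘ Equiv.piCongrRight σ) :=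
  ⟨1, σ, fun _ => rfl⟩

/-- The profile of `A` in direction `i`: the multiset of the rates of its `n` hyperplanes
`Γ_{i,j}`, as an unordered `n`-tuple of elements of `{0, …, n ^ (d - 1)}` so that such profiles
can be counted. -/
def directionProfile (A : (Fin d → Fin n) → Bool) (i : Fin d) : Sym (Fin (n ^ (d - 1) + 1)) n :=
  ⟨univ.val.map fun j => ⟨rate A i j, Nat.lt_succ_of_le (rate_le A i j)⟩, by simp⟩

lemma map_val_directionProfile (A : (Fin d → Fin n) → Bool) (i : Fin d) :
    (directionProfile A i).val.map Fin.val = univ.val.map (rate A i) := by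
  simp [directionProfile, Function.comp_def]

lemma exists_perm_of_directionProfile_eq {i : Fin d}
    (h : directionProfile A i = directionProfile B i) :
    ∃ σ : Equiv.Perm (Fin n), ∀ j, rate A i (σ j) = rate B i j := by
  apply exists_equiv_of_map_univ_val_eq
  rw [← map_val_directionProfile, ← map_val_directionProfile, h]

lemma IsThreshold.matEquiv_of_directionProfile_eq [NeZero d] (hA : IsThreshold A)
    (h : directionProfile A = directionProfile B) : MatEquiv A B := by
  choose σ hσ using fun i => exists_perm_of_directionProfile_eq (congrFun h i)
  have comp_eq : A ∘ Equiv.piCongrRight σ = B :=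
    (hA.comp_piCongrRight σ).eq_of_rate_eq fun i j => by rw [rate_comp_piCongrRight, hσ]
  exact comp_eq ▸ matEquiv_comp_piCongrRight A σ

end Rate

/-- The equivalence classes of `d`-dimensional threshold matrices of order `n`: the
quotient by the equivalence relation generated by `MatEquiv`. -/
abbrev ThresholdClass (d n : ℕ) : Type :=
  Quot fun A B : {A : (Fin d → Fin n) → Bool // IsThreshold A} => MatEquiv A.1 B.1

lemma card_thresholdClass_le_two_pow (d n : ℕ) : Nat.card (ThresholdClass d n) ≤ 2 ^ n ^ d :=
  calc Nat.card (ThresholdClass d n)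
      ≤ Nat.card {A : (Fin d → Fin n) → Bool // IsThreshold A} :=
        Nat.card_le_card_of_surjective _ Quot.mk_surjective
    _ ≤ Nat.card ((Fin d → Fin n) → Bool) := Finite.card_subtype_le _
    _ = 2 ^ n ^ d := by simp

lemma card_thresholdClass_le_choose_pow (d n : ℕ) [NeZero d] :
    Nat.card (ThresholdClass d n) ≤ (n ^ (d - 1) + n).choose n ^ d :=
  calc Nat.card (ThresholdClass d n)
      ≤ Nat.card (Fin d → Sym (Fin (n ^ (d - 1) + 1)) n) :=
        card_quot_le_of_eq_imp_rel (fun A => directionProfile A.1) fun A _ h =>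
          A.2.matEquiv_of_directionProfile_eq h
    _ = (n ^ (d - 1) + n).choose n ^ d := by
        simp [Sym.card_sym_eq_choose, Nat.card_eq_fintype_card]

/-- The number of equivalence classes of d-dimensional threshold matrices of order n is at
most n^(n d (d-1)) + 1. -/
theorem stmt_6 (d n : ℕ) (hd : 2 ≤ d) (hn : 1 ≤ n) :
    Nat.card (Quot (fun A B : {A : (Fin d → Fin n) → Bool // IsThreshold A} =>
      MatEquiv A.1 B.1)) ≤ n ^ (n * d * (d - 1)) + 1 := by
  have : NeZero d := ⟨by omega⟩
  obtain rfl | hn2 := hn.eq_or_lt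
  · simpa using card_thresholdClass_le_two_pow d 1
  by_cases hdn : d = 2 ∧ n = 2
  · obtain ⟨rfl, rfl⟩ := hdn
    exact (card_thresholdClass_le_two_pow 2 2).trans (by norm_num)
  have n_le : n ≤ n ^ (d - 1) := Nat.le_self_pow (by omega) n
  have four_le (hd3 : 3 ≤ d) : 4 ≤ n ^ (d - 1) :=
    calc 2 ^ 2 ≤ n ^ 2 := Nat.pow_le_pow_left hn2 2
      _ ≤ n ^ (d - 1) := Nat.pow_le_pow_right hn (by omega)
  calc Nat.card (ThresholdClass d n)
      ≤ (n ^ (d - 1) + n).choose n ^ d := card_thresholdClass_le_choose_pow d n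
    _ ≤ ((n ^ (d - 1)) ^ n) ^ d :=
        Nat.pow_le_pow_left (choose_add_le_pow (by omega) hn2 (by omega)) d
    _ = n ^ (n * d * (d - 1)) := by rw [← pow_mul, ← pow_mul]; ring_nf
    _ ≤ n ^ (n * d * (d - 1)) + 1 := Nat.le_succ _
end

section
/- For every integer d ≥ 4, the number of equivalence classes of d-dimensional extremal (0,1)-matrices of order 2 is at most 2^{d(d−3)}. -/
open Finset

/-!
Call an order-2 matrix self-dual if its support contains exactly one index of each antipodal pair.
An extremal matrix is self-dual: two antipodal support indices form a polydiagonal, while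
polydiagonals obtained by adding either of two antipodal indices can be combined so that the two
added indices have equal weight, and subtracting this multiple of the antipodal pair leaves, after
scaling, a polydiagonal of the original matrix. A self-dual matrix `A` without polydiagonal is
determined by its rates: if a self-dual `B` has the same rates, then `supp A \ supp B` meets
parallel hyperplanes equally often, so it carries a uniform polydiagonal unless it is empty.

In a self-dual matrix the two rates of a direction add up to `2 ^ (d - 1)`, so up to equivalence an
extremal matrix is determined by the multiset of the smaller rates. These are at most `2 ^ (d - 2)`
and all have the same parity. If one of them is `0`, the support is a hyperplane and the multiset is
known; otherwise the parity leaves `2 ^ (d - 3)` values for each of them. Hence there are at most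
`2 * multichoose (2 ^ (d - 3)) d + 1` multisets.
-/

section Counting

theorem multichoose_succ_le (m n : ℕ) : m.multichoose (n + 1) ≤ m * m.multichoose n := by
  have cons_surjective : Function.Surjective
      fun p : Fin m × Sym (Fin m) n => p.1 ::ₛ p.2 := fun s =>
    let ⟨a, t, hs⟩ := s.exists_eq_cons_of_succ
    ⟨(a, t), hs.symm⟩
  simpa [Sym.card_sym_eq_multichoose] using Fintype.card_le_of_surjective _ cons_surjective

theorem twentyFour_mul_multichoose_four (m : ℕ) :
    24 * m.multichoose 4 = m * (m + 1) * (m + 2) * (m + 3) := by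
  rw [Nat.multichoose_eq, show 24 = Nat.factorial 4 from rfl,
    ← Nat.ascFactorial_eq_factorial_mul_choose']
  simp only [Nat.ascFactorial_succ, Nat.ascFactorial_zero]
  ring

theorem two_mul_multichoose_lt_pow {m n : ℕ} (hm : 2 ≤ m) (hn : 4 ≤ n) :
    2 * m.multichoose n < m ^ n := by
  induction n, hn using Nat.le_induction with
  | base =>
    have := twentyFour_mul_multichoose_four m
    obtain ⟨e, rfl⟩ := Nat.exists_eq_add_of_le' hm
    nlinarith [Nat.zero_le (e ^ 2), Nat.zero_le (e ^ 3), Nat.zero_le (e ^ 4)]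
  | succ n _ ih =>
    calc 2 * m.multichoose (n + 1) ≤ 2 * (m * m.multichoose n) :=
          Nat.mul_le_mul_left 2 (multichoose_succ_le m n)
      _ = 2 * m.multichoose n * m := by ring
      _ < m ^ n * m := Nat.mul_lt_mul_of_pos_right ih (by lia)
      _ = m ^ (n + 1) := (pow_succ m n).symm

theorem card_quot_le_card {X Y : Type*} {r : X → X → Prop} (f : X → Y) (T : Finset Y)
    (mem_T : ∀ x, f x ∈ T) (rel_of_eq : ∀ x y, f x = f y → r x y) :
    Nat.card (Quot r) ≤ #T := by
  have out_injective : Function.Injective fun q : Quot r => (⟨f q.out, mem_T _⟩ : T) := by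
    intro p q hpq
    rw [← Quot.out_eq p, ← Quot.out_eq q]
    exact Quot.sound (rel_of_eq _ _ (congrArg Subtype.val hpq))
  simpa using Nat.card_le_card_of_injective _ out_injective

theorem exists_perm_of_map_univ_eq {X Y : Type*} [Fintype X] {f g : X → Y}
    (h : (univ : Finset X).val.map f = (univ : Finset X).val.map g) :
    ∃ π : Equiv.Perm X, ∀ x, g (π x) = f x := by
  classical
  have card_fiber_eq (y : Y) : Fintype.card {x // f x = y} = Fintype.card {x // g x = y} := by
    have := congrArg (Multiset.count y) h
    rw [Multiset.count_map, Multiset.count_map] at this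
    simpa [Fintype.card_subtype, Finset.card, Finset.filter_val, eq_comm] using this
  exact ⟨Equiv.ofFiberEquiv fun y => Fintype.equivOfCardEq (card_fiber_eq y),
    Equiv.ofFiberEquiv_map _⟩

theorem card_filter_forall_mem_eq {ι κ : Type*} [Fintype ι] [DecidableEq ι] [Fintype κ]
    [DecidableEq κ] (S : Finset ι) (β : ι → κ) :
    #{α : ι → κ | ∀ i ∈ S, α i = β i} = Fintype.card κ ^ (Fintype.card ι - #S) := by
  have subcube_eq : ({α : ι → κ | ∀ i ∈ S, α i = β i} : Finset (ι → κ)) =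
      Fintype.piFinset fun i => if i ∈ S then {β i} else univ := by
    ext α
    simp only [mem_filter_univ, Fintype.mem_piFinset]
    refine forall_congr' fun i => ?_
    by_cases hi : i ∈ S <;> simp [hi]
  rw [subcube_eq, Fintype.card_piFinset, ← card_compl]
  simp [apply_ite Finset.card, prod_ite, filter_notMem_eq_sdiff, compl_eq_univ_sdiff]

end Counting

section Hyperplanes

variable {d n : ℕ}

theorem card_hyperplane (i : Fin d) (j : Fin n) : #{α : Fin d → Fin n | α i = j} = n ^ (d - 1) := by
  simpa using card_filter_forall_mem_eq {i} fun _ : Fin d => j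

theorem card_hyperplane_inter {i i' : Fin d} (h : i ≠ i') (j j' : Fin n) :
    #{α : Fin d → Fin n | α i = j ∧ α i' = j'} = n ^ (d - 2) := by
  simpa [h.symm, card_pair h] using
    card_filter_forall_mem_eq {i, i'} fun x => if x = i then j else j'

theorem hypSum_add (k l : (Fin d → Fin n) → ℝ) (i : Fin d) (j : Fin n) :
    hypSum (k + l) i j = hypSum k i j + hypSum l i j :=
  sum_add_distrib

theorem hypSum_smul (c : ℝ) (k : (Fin d → Fin n) → ℝ) (i : Fin d) (j : Fin n) :
    hypSum (c • k) i j = c * hypSum k i j :=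
  (mul_sum _ _ _).symm

theorem hypSum_single (β : Fin d → Fin n) (i : Fin d) (j : Fin n) :
    hypSum (Pi.single β 1) i j = if β i = j then 1 else 0 := by
  simp [hypSum, Pi.single_apply]

theorem hypSum_indicator (A : (Fin d → Fin n) → Bool) (i : Fin d) (j : Fin n) :
    hypSum (fun α => if A α then 1 else 0) i j = rate A i j := by
  simp [hypSum, rate, filter_filter, and_comm]

theorem rate_eq_zero_iff {A : (Fin d → Fin n) → Bool} {i : Fin d} {j : Fin n} :
    rate A i j = 0 ↔ ∀ α, α i = j → A α = false := by
  simp only [rate, card_eq_zero, filter_eq_empty_iff, mem_univ, true_imp_iff, not_and,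
    ← Bool.not_eq_true]
  exact forall_congr' fun α => imp_not_comm

theorem rate_add_rate_not (A : (Fin d → Fin n) → Bool) (i : Fin d) (j : Fin n) :
    rate A i j + rate Aᶜ i j = n ^ (d - 1) := by
  rw [← card_hyperplane i j, ← card_filter_add_card_filter_not fun α => A α = true]
  simp [rate, filter_filter, and_comm]

theorem sdiff_apply_eq_and_not (A B : (Fin d → Fin n) → Bool) (α : Fin d → Fin n) :
    (A \ B) α = (A α && !B α) :=
  rfl

theorem rate_add_rate_sdiff_comm (A B : (Fin d → Fin n) → Bool) (i : Fin d) (j : Fin n) :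
    rate A i j + rate (B \ A) i j =
      rate B i j + rate (A \ B) i j := by
  simp only [rate, card_filter, ← sum_add_distrib, sdiff_apply_eq_and_not]
  exact sum_congr rfl fun α _ => by cases A α <;> cases B α <;> simp

theorem sum_rate (A : (Fin d → Fin n) → Bool) (i : Fin d) :
    ∑ j, rate A i j = #{α | A α = true} := by
  rw [card_eq_sum_card_fiberwise (f := fun α => α i) (t := univ) (by simp)]
  simp [rate, filter_filter]

end Hyperplanes

section Weightings

variable {d n : ℕ} {A : (Fin d → Fin n) → Bool}

/-- `w` is a nonnegative weighting of the support of `A`: a polydiagonal of `A` without the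
normalization of its hyperplane sums. -/
def IsWeighting (A : (Fin d → Fin n) → Bool) (w : (Fin d → Fin n) → ℝ) : Prop :=
  (∀ α, 0 ≤ w α) ∧ ∀ α, A α = false → w α = 0

theorem IsWeighting.add {w v : (Fin d → Fin n) → ℝ} (hw : IsWeighting A w)
    (hv : IsWeighting A v) : IsWeighting A (w + v) :=
  ⟨fun α => add_nonneg (hw.1 α) (hv.1 α), fun α hα => by simp [hw.2 α hα, hv.2 α hα]⟩

theorem IsWeighting.hasPolydiagonal {w : (Fin d → Fin n) → ℝ} (hw : IsWeighting A w) {c : ℝ}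
    (hc : 0 < c) (h : ∀ i j, hypSum w i j = c) : HasPolydiagonal A := by
  refine ⟨c⁻¹ • w, fun α => ?_, fun α hα => ?_, fun i j => ?_⟩
  · exact mul_nonneg (inv_pos.2 hc).le (hw.1 α)
  · simp [hw.2 α hα]
  · rw [hypSum_smul, h, inv_mul_cancel₀ hc.ne']

theorem isWeighting_single {β : Fin d → Fin n} (hβ : A β = true) :
    IsWeighting A (Pi.single β 1) := by
  refine ⟨fun α => ?_, fun α hα => Pi.single_eq_of_ne (by rintro rfl; simp_all) 1⟩
  rw [Pi.single_apply]
  positivity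

theorem hasPolydiagonal_of_rate_eq {D : (Fin d → Fin n) → Bool}
    (hDA : D ≤ A) {c : ℝ} (hc : 0 < c) (h : ∀ i j, (rate D i j : ℝ) = c) :
    HasPolydiagonal A := by
  have indicator_isWeighting : IsWeighting A fun α => if D α then 1 else 0 := by
    refine ⟨fun α => by positivity, fun α hα => if_neg fun hD => ?_⟩
    exact Bool.false_ne_true (hα.symm.trans (hDA α hD))
  exact indicator_isWeighting.hasPolydiagonal hc fun i j => by
    rw [hypSum_indicator, h]

theorem IsPolydiagonal.apply_pos_of_addEntry {β : Fin d → Fin n} {k : (Fin d → Fin n) → ℝ}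
    (hA : ¬ HasPolydiagonal A) (hk : IsPolydiagonal (addEntry A β) k) : 0 < k β := by
  obtain ⟨k_nonneg, k_eq_zero, hypSum_k⟩ := hk
  refine (k_nonneg β).lt_of_ne' fun hβ => hA ⟨k, k_nonneg, fun α hα => ?_, hypSum_k⟩
  rcases eq_or_ne α β with rfl | hne
  · exact hβ
  · exact k_eq_zero α (by simp [addEntry, hne, hα])

/-- The weighting is a polydiagonal of `addEntry A β`, scaled to have entry `1` at `β`, minus the
point mass at `β`. -/
theorem exists_isWeighting_of_hasPolydiagonal_addEntry {β : Fin d → Fin n}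
    (hA : ¬ HasPolydiagonal A) (hβ : HasPolydiagonal (addEntry A β)) :
    ∃ w c, IsWeighting A w ∧ 0 < c ∧
      ∀ i j, hypSum w i j + (if β i = j then 1 else 0) = c := by
  obtain ⟨k, hk⟩ := hβ
  have k_pos := hk.apply_pos_of_addEntry hA
  obtain ⟨k_nonneg, k_eq_zero, hypSum_k⟩ := hk
  refine ⟨Function.update ((k β)⁻¹ • k) β 0, (k β)⁻¹, ⟨fun α => ?_, fun α hα => ?_⟩,
    inv_pos.2 k_pos, fun i j => ?_⟩
  · rcases eq_or_ne α β with rfl | hne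
    · simp
    · simpa [hne] using mul_nonneg (inv_pos.2 k_pos).le (k_nonneg α)
  · rcases eq_or_ne α β with rfl | hne
    · simp
    · simp [hne, k_eq_zero α (by simp [addEntry, hne, hα])]
  · have update_add_single :
        Function.update ((k β)⁻¹ • k) β 0 + Pi.single β 1 = (k β)⁻¹ • k := by
      funext α
      rcases eq_or_ne α β with rfl | hne
      · simp [k_pos.ne']
      · simp [hne]
    rw [← hypSum_single, ← hypSum_add, update_add_single, hypSum_smul, hypSum_k, mul_one]

theorem IsExtremal.nonempty_fin (hA : IsExtremal A) : Nonempty (Fin d) := by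
  by_contra hd
  rw [not_nonempty_iff] at hd
  exact hA.1 ⟨0, fun _ => le_rfl, fun _ _ => rfl, isEmptyElim⟩

end Weightings

section Relabelling

variable {d n : ℕ}

/-- The permutation of the indices through which `MatEquiv` acts: it permutes the directions by `π`
and the hyperplanes of direction `i` by `σ i`. -/
def relabel (π : Equiv.Perm (Fin d)) (σ : Fin d → Equiv.Perm (Fin n)) :
    Equiv.Perm (Fin d → Fin n) :=
  (Equiv.piCongrRight σ).trans (π.arrowCongr (Equiv.refl _))

theorem relabel_apply (π : Equiv.Perm (Fin d)) (σ : Fin d → Equiv.Perm (Fin n))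
    (α : Fin d → Fin n) (i : Fin d) : relabel π σ α i = σ (π.symm i) (α (π.symm i)) :=
  rfl

theorem rate_comp_relabel (A : (Fin d → Fin n) → Bool) (π : Equiv.Perm (Fin d))
    (σ : Fin d → Equiv.Perm (Fin n)) (i : Fin d) (j : Fin n) :
    rate (A ∘ relabel π σ) i j = rate A (π i) (σ i j) :=
  card_equiv (relabel π σ) fun α => by simp [relabel_apply]

end Relabelling

section SelfDual

variable {d : ℕ} {A B : (Fin d → Fin 2) → Bool}

theorem ne_iff_eq_rev : ∀ {x j : Fin 2}, x ≠ j ↔ x = j.rev := by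
  decide

/-- The index of the cube `{0, 1} ^ d` opposite to a given one, as a permutation. -/
def antipode : Equiv.Perm (Fin d → Fin 2) :=
  relabel 1 fun _ => Fin.revPerm

theorem antipode_apply (α : Fin d → Fin 2) (i : Fin d) : antipode α i = (α i).rev :=
  rfl

theorem relabel_antipode (π : Equiv.Perm (Fin d)) (σ : Fin d → Equiv.Perm (Fin 2))
    (α : Fin d → Fin 2) : relabel π σ (antipode α) = antipode (relabel π σ α) := by
  have perm_rev : ∀ (s : Equiv.Perm (Fin 2)) (x : Fin 2), s x.rev = (s x).rev := by decide
  funext i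
  simp only [relabel_apply, antipode_apply, perm_rev]

theorem ite_add_ite_antipode (β : Fin d → Fin 2) (i : Fin d) (j : Fin 2) :
    (if β i = j then 1 else 0) + (if antipode β i = j then 1 else 0) = (1 : ℝ) := by
  simp only [antipode_apply, Fin.rev_eq_iff, ← ne_iff_eq_rev]
  split_ifs <;> simp_all

theorem hasPolydiagonal_of_antipode {β : Fin d → Fin 2} (hβ : A β = true)
    (hβ' : A (antipode β) = true) : HasPolydiagonal A :=
  ((isWeighting_single hβ).add (isWeighting_single hβ')).hasPolydiagonal one_pos fun i j => by
    rw [hypSum_add, hypSum_single, hypSum_single, ite_add_ite_antipode]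

theorem hasPolydiagonal_of_addEntry_antipode [Nonempty (Fin d)] {β : Fin d → Fin 2}
    (hβ : HasPolydiagonal (addEntry A β)) (hβ' : HasPolydiagonal (addEntry A (antipode β))) :
    HasPolydiagonal A := by
  by_contra hA
  obtain ⟨w, b, hw, -, hypSum_w⟩ := exists_isWeighting_of_hasPolydiagonal_addEntry hA hβ
  obtain ⟨v, c, hv, c_pos, hypSum_v⟩ := exists_isWeighting_of_hasPolydiagonal_addEntry hA hβ'
  have one_le_b : 1 ≤ b := by
    let i := Classical.arbitrary (Fin d)
    rw [← hypSum_w i (β i), if_pos rfl, le_add_iff_nonneg_left]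
    exact sum_nonneg fun α _ => hw.1 α
  refine hA ((hw.add hv).hasPolydiagonal (c := b + c - 1) (by linarith) fun i j => ?_)
  rw [hypSum_add]
  linarith [hypSum_w i j, hypSum_v i j, ite_add_ite_antipode β i j]

/-- `A` is self-dual as a Boolean function: exactly one index of each antipodal pair lies in its
support. -/
def IsSelfDual (A : (Fin d → Fin 2) → Bool) : Prop :=
  ∀ α, A (antipode α) = !A α

theorem IsExtremal.isSelfDual (hA : IsExtremal A) : IsSelfDual A := by
  have := hA.nonempty_fin
  intro α
  cases hα : A α <;> cases hα' : A (antipode α)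
  · exact (hA.1 (hasPolydiagonal_of_addEntry_antipode (hA.2 _ hα) (hA.2 _ hα'))).elim
  · rfl
  · rfl
  · exact (hA.1 (hasPolydiagonal_of_antipode hα hα')).elim

theorem IsSelfDual.comp_relabel (hA : IsSelfDual A) (π : Equiv.Perm (Fin d))
    (σ : Fin d → Equiv.Perm (Fin 2)) : IsSelfDual (A ∘ relabel π σ) := fun α => by
  simp only [Function.comp_apply, relabel_antipode, hA (relabel π σ α)]

theorem rate_comp_antipode (A : (Fin d → Fin 2) → Bool) (i : Fin d) (j : Fin 2) :
    rate (fun α => A (antipode α)) i j = rate A i j.rev :=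
  rate_comp_relabel A 1 _ i j

theorem IsSelfDual.rate_rev (hA : IsSelfDual A) (i : Fin d) (j : Fin 2) :
    rate A i j.rev = rate Aᶜ i j := by
  rw [← rate_comp_antipode]
  exact congrArg (rate · i j) (funext hA)

theorem IsSelfDual.rate_add_rate_rev (hA : IsSelfDual A) (i : Fin d) (j : Fin 2) :
    rate A i j + rate A i j.rev = 2 ^ (d - 1) := by
  rw [hA.rate_rev, rate_add_rate_not]

theorem IsSelfDual.rate_sdiff_rev (hA : IsSelfDual A) (hB : IsSelfDual B) (i : Fin d) (j : Fin 2) :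
    rate (A \ B) i j.rev = rate (B \ A) i j := by
  rw [← rate_comp_antipode]
  refine congrArg (rate · i j) (funext fun α => ?_)
  simp only [sdiff_apply_eq_and_not, hA α, hB α, Bool.not_not, Bool.and_comm]

theorem IsSelfDual.exists_apply_eq_true_and_eq_false (hA : IsSelfDual A) (hB : IsSelfDual B)
    (hne : A ≠ B) : ∃ α, A α = true ∧ B α = false := by
  obtain ⟨α, hα⟩ := Function.ne_iff.1 hne
  cases hAα : A α
  · exact ⟨antipode α, by simp_all [hA α, hB α]⟩
  · exact ⟨α, by simp_all⟩

theorem IsSelfDual.eq_of_rate_eq (hA : IsSelfDual A) (hB : IsSelfDual B)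
    (hpoly : ¬ HasPolydiagonal A) (hrate : ∀ i j, rate A i j = rate B i j) : A = B := by
  by_contra hne
  have rate_rev_eq (i j) : rate (A \ B) i j.rev = rate (A \ B) i j := by
    have := rate_add_rate_sdiff_comm A B i j
    rw [hrate] at this
    rw [hA.rate_sdiff_rev hB, Nat.add_left_cancel this]
  have two_mul_rate (i j) : 2 * rate (A \ B) i j = #{α | (A \ B) α = true} := by
    rw [← sum_rate (A \ B) i, Fin.sum_univ_two]
    have : rate (A \ B) i 1 = rate (A \ B) i 0 := rate_rev_eq i 0
    fin_cases j <;> simp [this, two_mul]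
  have support_nonempty : 0 < #{α | (A \ B) α = true} := by
    obtain ⟨α, hAα, hBα⟩ := hA.exists_apply_eq_true_and_eq_false hB hne
    exact card_pos.2 ⟨α, by rw [mem_filter_univ, sdiff_apply_eq_and_not, hAα, hBα]; rfl⟩
  refine hpoly (hasPolydiagonal_of_rate_eq (D := A \ B) sdiff_le
    (half_pos (Nat.cast_pos.2 support_nonempty)) fun i j => ?_)
  rw [← two_mul_rate i j]
  push_cast
  ring

theorem IsSelfDual.apply_eq_true_iff_of_rate_eq_zero (hA : IsSelfDual A) {i : Fin d} {j : Fin 2}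
    (h : rate A i j = 0) (α : Fin d → Fin 2) : A α = true ↔ α i = j.rev := by
  rw [rate_eq_zero_iff] at h
  rw [← ne_iff_eq_rev]
  refine ⟨fun hα hij => by simp [h α hij] at hα, fun hij => ?_⟩
  have := h (antipode α) (by rw [antipode_apply, ne_iff_eq_rev.1 hij, Fin.rev_rev])
  simpa [hA α] using this

/-- The antipode maps the part of `supp A` in `Γ_{i',j} \ Γ_{i,j}` onto the part of
`Γ_{i,j} \ Γ_{i',j}` outside `supp A`. -/
theorem IsSelfDual.exists_rate_add_rate_eq (hA : IsSelfDual A) {i i' : Fin d} (h : i ≠ i')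
    (j : Fin 2) : ∃ x, rate A i j + rate A i' j = 2 * x + 2 ^ (d - 2) := by
  have rate_left : rate A i j = #{α | A α = true ∧ α i = j ∧ α i' = j} +
      #{α | A α = true ∧ α i = j ∧ α i' = j.rev} := by
    rw [rate, ← card_filter_add_card_filter_not fun α => α i' = j]
    simp only [filter_filter, and_assoc, ← ne_iff_eq_rev]
  have rate_right : rate A i' j = #{α | A α = true ∧ α i = j ∧ α i' = j} +
      #{α | A α = false ∧ α i = j ∧ α i' = j.rev} := by
    rw [rate, ← card_filter_add_card_filter_not fun α => α i = j]
    congr 1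
    · rw [filter_filter]
      exact congrArg card (filter_congr fun α _ => by tauto)
    · refine card_equiv antipode fun α => ?_
      simp [hA α, antipode_apply, Fin.rev_eq_iff, ← ne_iff_eq_rev, and_assoc, and_comm]
  have card_inter : #{α | A α = true ∧ α i = j ∧ α i' = j.rev} +
      #{α | A α = false ∧ α i = j ∧ α i' = j.rev} = 2 ^ (d - 2) := by
    rw [← card_hyperplane_inter h j j.rev,
      ← card_filter_add_card_filter_not (s := {α | α i = j ∧ α i' = j.rev}) fun α => A α = true]
    simp only [filter_filter, and_comm, Bool.not_eq_true]
  exact ⟨#{α | A α = true ∧ α i = j ∧ α i' = j}, by lia⟩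

theorem IsSelfDual.rate_modEq_two (hA : IsSelfDual A) (hd : 3 ≤ d) (i i' : Fin d) (j j' : Fin 2) :
    rate A i j ≡ rate A i' j' [MOD 2] := by
  obtain ⟨e, rfl⟩ := Nat.exists_eq_add_of_le' hd
  have same_level : rate A i j ≡ rate A i' j [MOD 2] := by
    rcases eq_or_ne i i' with rfl | h
    · rfl
    · obtain ⟨x, hx⟩ := hA.exists_rate_add_rate_eq h j
      rw [show e + 3 - 2 = e + 1 by lia, pow_succ] at hx
      unfold Nat.ModEq
      lia
  have same_direction : rate A i' j ≡ rate A i' j' [MOD 2] := by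
    rcases eq_or_ne j' j with rfl | h
    · rfl
    · have hsum := hA.rate_add_rate_rev i' j
      rw [show e + 3 - 1 = e + 2 by lia, pow_succ] at hsum
      rw [ne_iff_eq_rev.1 h]
      unfold Nat.ModEq
      lia
  exact same_level.trans same_direction

end SelfDual

section RateSpectrum

variable {d : ℕ} {A B : (Fin d → Fin 2) → Bool}

/-- The smaller of the rates of the two hyperplanes of direction `i`. -/
def minRate (A : (Fin d → Fin 2) → Bool) (i : Fin d) : ℕ :=
  min (rate A i 0) (rate A i 1)

theorem exists_rate_eq_minRate (A : (Fin d → Fin 2) → Bool) (i : Fin d) :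
    ∃ j, rate A i j = minRate A i :=
  (min_choice (rate A i 0) (rate A i 1)).elim (fun h => ⟨0, h.symm⟩) fun h => ⟨1, h.symm⟩

theorem IsSelfDual.minRate_le (hA : IsSelfDual A) (i : Fin d) : minRate A i ≤ 2 ^ (d - 2) := by
  have rate_add_rate : rate A i 0 + rate A i 1 = 2 ^ (d - 1) := hA.rate_add_rate_rev i 0
  have pow_le : 2 ^ (d - 1) ≤ 2 ^ (d - 2) * 2 := by
    rw [← pow_succ]
    exact Nat.pow_le_pow_right two_pos (by lia)
  unfold minRate
  lia

theorem IsSelfDual.minRate_modEq_two (hA : IsSelfDual A) (hd : 3 ≤ d) (i i' : Fin d) :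
    minRate A i ≡ minRate A i' [MOD 2] := by
  obtain ⟨j, hj⟩ := exists_rate_eq_minRate A i
  obtain ⟨j', hj'⟩ := exists_rate_eq_minRate A i'
  rw [← hj, ← hj']
  exact hA.rate_modEq_two hd i i' j j'

theorem IsSelfDual.exists_perm_rate_eq (hA : IsSelfDual A) (hB : IsSelfDual B) {i i' : Fin d}
    (h : minRate A i = minRate B i') :
    ∃ s : Equiv.Perm (Fin 2), ∀ j, rate A i (s j) = rate B i' j := by
  have sum_A : rate A i 0 + rate A i 1 = 2 ^ (d - 1) := hA.rate_add_rate_rev i 0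
  have sum_B : rate B i' 0 + rate B i' 1 = 2 ^ (d - 1) := hB.rate_add_rate_rev i' 0
  unfold minRate at h
  rcases eq_or_ne (rate A i 0) (rate B i' 0) with h0 | h0
  · refine ⟨1, Fin.forall_fin_two.2 ⟨h0, ?_⟩⟩
    rw [Equiv.Perm.one_apply]
    lia
  · refine ⟨Equiv.swap 0 1, Fin.forall_fin_two.2 ⟨?_, ?_⟩⟩
    · rw [Equiv.swap_apply_left]
      lia
    · rw [Equiv.swap_apply_right]
      lia

/-- The multiset of the smaller rates of all directions. For self-dual matrices it carries the same
information as `profile`, because parallel rates add up to `2 ^ (d - 1)`. -/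
def rateSpectrum (A : (Fin d → Fin 2) → Bool) : Multiset ℕ :=
  (univ : Finset (Fin d)).val.map (minRate A)

theorem IsSelfDual.matEquiv_of_rateSpectrum_eq (hA : IsSelfDual A) (hB : IsSelfDual B)
    (hpoly : ¬ HasPolydiagonal B) (h : rateSpectrum A = rateSpectrum B) : MatEquiv A B := by
  obtain ⟨π, hπ⟩ := exists_perm_of_map_univ_eq h.symm
  choose σ hσ using fun i => hA.exists_perm_rate_eq hB (hπ i)
  have eq_relabel : B = A ∘ relabel π σ :=
    hB.eq_of_rate_eq (hA.comp_relabel π σ) hpoly fun i j => by rw [rate_comp_relabel, hσ]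
  exact ⟨π, σ, congrFun eq_relabel⟩

theorem IsSelfDual.rateSpectrum_of_minRate_eq_zero (hA : IsSelfDual A) {i : Fin d}
    (h : minRate A i = 0) :
    rateSpectrum A = 0 ::ₘ Multiset.replicate (d - 1) (2 ^ (d - 2)) := by
  obtain ⟨j, hj⟩ := exists_rate_eq_minRate A i
  have support_eq := hA.apply_eq_true_iff_of_rate_eq_zero (hj.trans h)
  have rate_of_ne {i' : Fin d} (hne : i' ≠ i) (j' : Fin 2) : rate A i' j' = 2 ^ (d - 2) := by
    simp only [rate, support_eq]
    exact card_hyperplane_inter hne.symm _ _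
  have minRate_of_mem_erase : ∀ i' ∈ univ.erase i, minRate A i' = 2 ^ (d - 2) := fun i' hi' => by
    simp only [minRate, rate_of_ne (ne_of_mem_erase hi'), min_self]
  rw [rateSpectrum, ← insert_erase (mem_univ i), insert_val_of_notMem (notMem_erase i univ),
    Multiset.map_cons, h, Multiset.map_congr rfl minRate_of_mem_erase, Multiset.map_const']
  simp

/-- The multisets of `d` numbers from `1` to `2 ^ (d - 2)` of equal parity (the entries are
`2 * v + p + 1` with `v < 2 ^ (d - 3)`), and the rate spectrum of a hyperplane. -/
def admissibleSpectra (d : ℕ) : Finset (Multiset ℕ) :=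
  insert (0 ::ₘ Multiset.replicate (d - 1) (2 ^ (d - 2)))
    (univ.image fun x : Sym (Fin (2 ^ (d - 3))) d × Fin 2 =>
      x.1.1.map fun v : Fin _ => 2 * (v : ℕ) + x.2 + 1)

theorem card_admissibleSpectra_le (d : ℕ) :
    #(admissibleSpectra d) ≤ 2 * (2 ^ (d - 3)).multichoose d + 1 := by
  refine (card_insert_le _ _).trans (Nat.add_le_add_right (card_image_le.trans_eq ?_) 1)
  rw [card_univ, Fintype.card_prod, Sym.card_sym_eq_multichoose, Fintype.card_fin, Fintype.card_fin,
    mul_comm]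

theorem IsSelfDual.rateSpectrum_mem_admissibleSpectra (hA : IsSelfDual A) (hd : 3 ≤ d) :
    rateSpectrum A ∈ admissibleSpectra d := by
  by_cases hzero : ∃ i, minRate A i = 0
  · obtain ⟨i, hi⟩ := hzero
    exact mem_insert.2 (.inl (hA.rateSpectrum_of_minRate_eq_zero hi))
  push Not at hzero
  have half_lt (i) : (minRate A i - 1) / 2 < 2 ^ (d - 3) := by
    have := hA.minRate_le i
    have := hzero i
    rw [show d - 2 = d - 3 + 1 by lia, pow_succ] at *
    lia
  let p : Fin 2 := Fin.ofNat 2 (minRate A ⟨0, by lia⟩ - 1)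
  have minRate_eq (i) : 2 * ((minRate A i - 1) / 2) + p + 1 = minRate A i := by
    have := hA.minRate_modEq_two hd i ⟨0, by lia⟩
    have := hzero i
    have := hzero ⟨0, by lia⟩
    simp only [Nat.ModEq, p, Fin.val_ofNat] at *
    lia
  refine mem_insert_of_mem (mem_image.2 ⟨(⟨univ.val.map fun i => ⟨_, half_lt i⟩, by simp⟩, p),
    mem_univ _, ?_⟩)
  rw [Multiset.map_map]
  exact Multiset.map_congr rfl fun i _ => minRate_eq i

end RateSpectrum

theorem card_extremal_classes_le {d : ℕ} (hd : 3 ≤ d) :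
    Nat.card (Quot (fun A B : {A : (Fin d → Fin 2) → Bool // IsExtremal A} =>
      MatEquiv A.1 B.1)) ≤ 2 * (2 ^ (d - 3)).multichoose d + 1 :=
  (card_quot_le_card (fun A => rateSpectrum A.1) (admissibleSpectra d)
    (fun A => A.2.isSelfDual.rateSpectrum_mem_admissibleSpectra hd)
    fun A B => A.2.isSelfDual.matEquiv_of_rateSpectrum_eq B.2.isSelfDual B.2.1).trans
    (card_admissibleSpectra_le d)

/-- The number of equivalence classes of d-dimensional extremal matrices of order 2 is at
most 2^(d(d-3)). -/
theorem stmt_11 (d : ℕ) (hd : 4 ≤ d) :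
    Nat.card (Quot (fun A B : {A : (Fin d → Fin 2) → Bool // IsExtremal A} =>
      MatEquiv A.1 B.1)) ≤ 2 ^ (d * (d - 3)) := by
  have two_le_pow : 2 ≤ 2 ^ (d - 3) := Nat.le_self_pow (by lia) 2
  calc _ ≤ 2 * (2 ^ (d - 3)).multichoose d + 1 := card_extremal_classes_le (by lia)
    _ ≤ (2 ^ (d - 3)) ^ d := two_mul_multichoose_lt_pow two_le_pow hd
    _ = 2 ^ (d * (d - 3)) := by rw [← pow_mul, mul_comm]
end
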